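/- (Theorem 1, H-update) Let α ∈ ℝ with α ≠ 1 and α ≠ 2, let p, n, k ≥ 1, and let V ∈ ℝ^{p×n}, W ∈ ℝ^{p×k}, H^t ∈ ℝ^{k×n} have strictly positive entries. Define H^{t+1}_{aj} = H^t_{aj} · ( Σ_i (1/Σ_b W_{ib} H^t_{bj})^{α−1} W_{ia} / Σ_i W_{ia} V_{ij}^{1−α} )^{1/(α−1)}. Then D^d_α(W H^{t+1} ‖ V) ≤ D^d_α(W H^t ‖ V); i.e., the generalized dual Kullback–Leibler divergence is non-increasing under the multiplicative update rule for H. -/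

import Mathlib

/-- Generalized dual Kullback–Leibler divergence `D^d_α(WH‖V)` between the
reconstruction `WH` and the positive matrix `V`. -/
noncomputable def dualDivNMF (α : ℝ) {p n k : ℕ} (V : Fin p → Fin n → ℝ)
    (W : Fin p → Fin k → ℝ) (H : Fin k → Fin n → ℝ) : ℝ :=
  ∑ i, ∑ j,
    ((∑ b, W i b * H b j) ^ (2 - α) - (2 - α) * (∑ b, W i b * H b j) * V i j ^ (1 - α)
      + (1 - α) * V i j ^ (2 - α)) / ((1 - α) * (2 - α))

/-!
Majorization–minimization, one column of `H` at a time. With `s = 2 - α` and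
`φ(x) = x ^ s / (s (s - 1))`, which is convex on `(0, ∞)` for every `s ≠ 0, 1`, the divergence
is, up to a term depending only on `V`, the sum over the columns `h` of `H` of
`∑ i, φ((W h)_i) - ⟨c, W h⟩ / (s - 1)` with `c_i = V_{ij} ^ (s - 1)`. Replace `h` by `h * r`.
Jensen's inequality with weights `W_{ib} h_b / (W h)_i` bounds the result by a function of `r`
that separates over the coordinates `r_b` and is exact at `r = 1`. Each of its summands is convex
in `r_b`, and the multiplicative factor of the update is its critical point.
-/

open Set Matrix

section Generator

variable {s : ℝ}

/-- The convex generator `φ(x) = x ^ s / (s (s - 1))` of the divergence, where `s = 2 - α`. It is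
normalized so that `φ''(x) = x ^ (s - 2)`, which makes it convex on `(0, ∞)` whatever the signs
of `s` and `s - 1`; for `s = 0` and `s = 1` it is `0` by the convention `x / 0 = 0`. -/
noncomputable def divGenerator (s x : ℝ) : ℝ := x ^ s / (s * (s - 1))

theorem hasDerivAt_divGenerator (hs0 : s ≠ 0) {x : ℝ} (hx : x ≠ 0) :
    HasDerivAt (divGenerator s) (x ^ (s - 1) / (s - 1)) x := by
  simpa only [divGenerator, mul_div_mul_left _ _ hs0] using!
    (Real.hasDerivAt_rpow_const (p := s) (.inl hx)).div_const (s * (s - 1))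

theorem convexOn_divGenerator (hs0 : s ≠ 0) (hs1 : s ≠ 1) :
    ConvexOn ℝ (Ioi 0) (divGenerator s) := by
  have hderiv (x : ℝ) (hx : 0 < x) := hasDerivAt_divGenerator hs0 hx.ne'
  have hderiv2 (x : ℝ) (hx : 0 < x) :
      HasDerivAt (fun x => x ^ (s - 1) / (s - 1)) (x ^ (s - 1 - 1)) x := by
    simpa only [mul_div_cancel_left₀ _ (sub_ne_zero.2 hs1)] using
      (Real.hasDerivAt_rpow_const (p := s - 1) (.inl hx.ne')).div_const (s - 1)
  refine convexOn_of_hasDerivWithinAt2_nonneg (convex_Ioi 0)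
    (fun x hx => (hderiv x hx).continuousAt.continuousWithinAt)
    (fun x hx => (hderiv x (interior_subset hx)).hasDerivWithinAt)
    (fun x hx => (hderiv2 x (interior_subset hx)).hasDerivWithinAt)
    fun x hx => Real.rpow_nonneg (le_of_lt (interior_subset hx)) _

theorem isMinOn_divGenerator_sub_mul (hs0 : s ≠ 0) (hs1 : s ≠ 1) {r : ℝ} (hr : 0 < r) :
    IsMinOn (fun x => divGenerator s x - r ^ (s - 1) / (s - 1) * x) (Ioi 0) r := by
  have hconvex : ConvexOn ℝ (Ioi 0) fun x => divGenerator s x - r ^ (s - 1) / (s - 1) * x :=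
    (convexOn_divGenerator hs0 hs1).sub
      ((LinearMap.mulLeft ℝ (r ^ (s - 1) / (s - 1))).concaveOn (convex_Ioi 0))
  have hderiv : HasDerivAt (fun x => divGenerator s x - r ^ (s - 1) / (s - 1) * x) 0 r := by
    simpa only [mul_one, sub_self] using (hasDerivAt_divGenerator hs0 hr.ne').fun_sub
      ((hasDerivAt_id' r).const_mul (r ^ (s - 1) / (s - 1)))
  exact hconvex.isMinOn_of_rightDeriv_eq_zero (by rwa [interior_Ioi])
    (hderiv.hasDerivWithinAt.derivWithin (uniqueDiffWithinAt_Ioi r))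

theorem divGenerator_mul {x y : ℝ} (hx : 0 ≤ x) (hy : 0 ≤ y) :
    divGenerator s (x * y) = x ^ s * divGenerator s y := by
  rw [divGenerator, divGenerator, Real.mul_rpow hx hy, mul_div_assoc]

theorem divGenerator_dotProduct_le {κ : Type*} [Fintype κ] (hs0 : s ≠ 0) (hs1 : s ≠ 1)
    {w r : κ → ℝ} (hw : ∀ b, 0 ≤ w b) (hwsum : 0 < ∑ b, w b) (hr : ∀ b, 0 < r b) :
    divGenerator s (w ⬝ᵥ r) ≤ (∑ b, w b) ^ (s - 1) * w ⬝ᵥ fun b => divGenerator s (r b) := by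
  set y := ∑ b, w b
  have hmean : 0 ≤ y⁻¹ * w ⬝ᵥ r :=
    mul_nonneg (inv_nonneg.2 hwsum.le) (Finset.sum_nonneg fun b _ => mul_nonneg (hw b) (hr b).le)
  have jensen : divGenerator s (y⁻¹ * w ⬝ᵥ r) ≤ y⁻¹ * w ⬝ᵥ fun b => divGenerator s (r b) :=
    (convexOn_divGenerator hs0 hs1).map_centerMass_le (t := Finset.univ) (fun b _ => hw b) hwsum
      fun b _ => hr b
  calc divGenerator s (w ⬝ᵥ r)
      = y ^ s * divGenerator s (y⁻¹ * w ⬝ᵥ r) := by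
        rw [← divGenerator_mul hwsum.le hmean, mul_inv_cancel_left₀ hwsum.ne']
    _ ≤ y ^ s * (y⁻¹ * w ⬝ᵥ fun b => divGenerator s (r b)) := by gcongr
    _ = y ^ (s - 1) * w ⬝ᵥ fun b => divGenerator s (r b) := by
        rw [Real.rpow_sub_one hwsum.ne', div_eq_mul_inv, mul_assoc]

end Generator

theorem vecMul_pos_of_pos {ι κ : Type*} [Fintype ι] {W : Matrix ι κ ℝ} {x : ι → ℝ}
    (hx : ∀ i, 0 < x i) {b : κ} (hW : ∀ i, 0 ≤ W i b) (hWb : ∃ i, 0 < W i b) :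
    0 < (x ᵥ* W) b :=
  let ⟨i₀, hi₀⟩ := hWb
  Finset.sum_pos' (fun i _ => mul_nonneg (hx i).le (hW i))
    ⟨i₀, Finset.mem_univ i₀, mul_pos (hx i₀) hi₀⟩

section Column

variable {ι κ : Type*} [Fintype ι] [Fintype κ] {s : ℝ} {W : Matrix ι κ ℝ} {c : ι → ℝ}
  {h r : κ → ℝ}

/-- The part of the divergence that depends on one column `h` of the second factor; the column
`v` of the target matrix enters through `c i = v i ^ (s - 1)`. -/
noncomputable def columnLoss (s : ℝ) (W : Matrix ι κ ℝ) (c : ι → ℝ) (h : κ → ℝ) : ℝ :=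
  ∑ i, divGenerator s ((W *ᵥ h) i) - c ⬝ᵥ W *ᵥ h / (s - 1)

/-- The numerators `∑ i, (W h)_i ^ (s - 1) * W i b` of the multiplicative update. Together with
the denominators `c ᵥ* W` they make up the gradient of the column loss: it equals
`(updateNumerator s W h - c ᵥ* W) / (s - 1)`. -/
noncomputable def updateNumerator (s : ℝ) (W : Matrix ι κ ℝ) (h : κ → ℝ) : κ → ℝ :=
  (fun i => (W *ᵥ h) i ^ (s - 1)) ᵥ* W

/-- The auxiliary function of the majorization–minimization argument: a separable upper bound,
exact at `r = 1`, for the column loss at the rescaled column `h * r`. -/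
noncomputable def columnSurrogate (s : ℝ) (W : Matrix ι κ ℝ) (c : ι → ℝ) (h r : κ → ℝ) : ℝ :=
  ∑ b, h b * (updateNumerator s W h b * divGenerator s (r b) - (c ᵥ* W) b / (s - 1) * r b)

theorem columnSurrogate_eq_sub :
    columnSurrogate s W c h r =
      (fun i => (W *ᵥ h) i ^ (s - 1)) ⬝ᵥ W *ᵥ (h * fun b => divGenerator s (r b))
        - c ⬝ᵥ W *ᵥ (h * r) / (s - 1) := by
  rw [dotProduct_mulVec, dotProduct_mulVec]
  simp only [columnSurrogate, updateNumerator, dotProduct, Pi.mul_apply, Finset.sum_div,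
    ← Finset.sum_sub_distrib]
  exact Finset.sum_congr rfl fun b _ => by ring

theorem columnLoss_mul_le_columnSurrogate (hs0 : s ≠ 0) (hs1 : s ≠ 1)
    (hW : ∀ i b, 0 ≤ W i b) (hh : ∀ b, 0 ≤ h b) (hWh : ∀ i, 0 < (W *ᵥ h) i)
    (hr : ∀ b, 0 < r b) :
    columnLoss s W c (h * r) ≤ columnSurrogate s W c h r := by
  have mulVec_mul (i : ι) (g : κ → ℝ) : (W *ᵥ (h * g)) i = (W i * h) ⬝ᵥ g := by
    simp only [mulVec, dotProduct, Pi.mul_apply, mul_assoc]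
  rw [columnSurrogate_eq_sub, columnLoss]
  refine sub_le_sub_right (Finset.sum_le_sum fun i _ => ?_) _
  rw [mulVec_mul, mulVec_mul]
  exact divGenerator_dotProduct_le hs0 hs1 (fun b => mul_nonneg (hW i b) (hh b)) (hWh i) hr

theorem columnSurrogate_one (hWh : ∀ i, 0 < (W *ᵥ h) i) :
    columnSurrogate s W c h 1 = columnLoss s W c h := by
  have generator_one : (h * fun b => divGenerator s ((1 : κ → ℝ) b)) = divGenerator s 1 • h := by
    ext b
    exact mul_comm _ _
  rw [columnSurrogate_eq_sub, columnLoss, generator_one, mul_one, mulVec_smul]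
  congr 1
  refine Finset.sum_congr rfl fun i _ => ?_
  calc (W *ᵥ h) i ^ (s - 1) * (divGenerator s 1 * (W *ᵥ h) i)
      = (W *ᵥ h) i ^ (s - 1) * (W *ᵥ h) i * divGenerator s 1 := by ring
    _ = (W *ᵥ h) i ^ s * divGenerator s 1 := by
        rw [Real.rpow_sub_one (hWh i).ne', div_mul_cancel₀ _ (hWh i).ne']
    _ = divGenerator s ((W *ᵥ h) i) := by
        rw [← divGenerator_mul (hWh i).le zero_le_one, mul_one]

theorem updateNumerator_nonneg (hW : ∀ i b, 0 ≤ W i b) (hWh : ∀ i, 0 ≤ (W *ᵥ h) i) (b : κ) :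
    0 ≤ updateNumerator s W h b :=
  Finset.sum_nonneg fun i _ => mul_nonneg (Real.rpow_nonneg (hWh i) _) (hW i b)

theorem columnSurrogate_le_of_stationary (hs0 : s ≠ 0) (hs1 : s ≠ 1)
    (hW : ∀ i b, 0 ≤ W i b) (hh : ∀ b, 0 ≤ h b) (hWh : ∀ i, 0 ≤ (W *ᵥ h) i)
    (hr : ∀ b, 0 < r b) (hstat : ∀ b, updateNumerator s W h b * r b ^ (s - 1) = (c ᵥ* W) b)
    {x : κ → ℝ} (hx : ∀ b, 0 < x b) :
    columnSurrogate s W c h r ≤ columnSurrogate s W c h x := by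
  refine Finset.sum_le_sum fun b _ => mul_le_mul_of_nonneg_left ?_ (hh b)
  have hmin := mul_le_mul_of_nonneg_left
    (isMinOn_divGenerator_sub_mul hs0 hs1 (hr b) (mem_Ioi.2 (hx b)))
    (updateNumerator_nonneg (s := s) hW hWh b)
  rw [← hstat b]
  linear_combination hmin

theorem columnLoss_mul_le_of_stationary (hs0 : s ≠ 0) (hs1 : s ≠ 1)
    (hW : ∀ i b, 0 ≤ W i b) (hh : ∀ b, 0 ≤ h b) (hWh : ∀ i, 0 < (W *ᵥ h) i)
    (hr : ∀ b, 0 < r b) (hstat : ∀ b, updateNumerator s W h b * r b ^ (s - 1) = (c ᵥ* W) b) :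
    columnLoss s W c (h * r) ≤ columnLoss s W c h :=
  calc columnLoss s W c (h * r)
      ≤ columnSurrogate s W c h r := columnLoss_mul_le_columnSurrogate hs0 hs1 hW hh hWh hr
    _ ≤ columnSurrogate s W c h 1 :=
        columnSurrogate_le_of_stationary hs0 hs1 hW hh (fun i => (hWh i).le) hr hstat
          fun _ => one_pos
    _ = columnLoss s W c h := columnSurrogate_one hWh

theorem columnLoss_update_le (hs0 : s ≠ 0) (hs1 : s ≠ 1)
    (hW : ∀ i b, 0 ≤ W i b) (hWcol : ∀ b, ∃ i, 0 < W i b) (hc : ∀ i, 0 < c i)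
    (hh : ∀ b, 0 ≤ h b) (hWh : ∀ i, 0 < (W *ᵥ h) i) :
    columnLoss s W c (h * fun b => (updateNumerator s W h b / (c ᵥ* W) b) ^ (1 / (1 - s))) ≤
      columnLoss s W c h := by
  have hnum (b : κ) : 0 < updateNumerator s W h b :=
    vecMul_pos_of_pos (fun i => Real.rpow_pos_of_pos (hWh i) _) (fun i => hW i b) (hWcol b)
  have hratio (b : κ) : 0 < updateNumerator s W h b / (c ᵥ* W) b :=
    div_pos (hnum b) (vecMul_pos_of_pos hc (fun i => hW i b) (hWcol b))
  refine columnLoss_mul_le_of_stationary hs0 hs1 hW hh hWh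
    (fun b => Real.rpow_pos_of_pos (hratio b) _) fun b => ?_
  rw [← neg_sub 1 s, Real.rpow_neg (Real.rpow_nonneg (hratio b).le _), one_div,
    Real.rpow_inv_rpow (hratio b).le (sub_ne_zero.2 hs1.symm), inv_div,
    mul_div_cancel₀ _ (hnum b).ne']

end Column

theorem dualDivNMF_eq_sum_columnLoss_add {α : ℝ} (hα1 : α ≠ 1) (hα2 : α ≠ 2)
    {p n k : ℕ} (V : Fin p → Fin n → ℝ) (W : Fin p → Fin k → ℝ)
    (H : Fin k → Fin n → ℝ) :
    dualDivNMF α V W H =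
      ∑ j, columnLoss (2 - α) (of W) (fun i => V i j ^ (1 - α)) (fun b => H b j)
        + ∑ j, ∑ i, V i j ^ (2 - α) / (2 - α) := by
  have split_summand (y v u : ℝ) :
      (y ^ (2 - α) - (2 - α) * y * v + (1 - α) * u) / ((1 - α) * (2 - α)) =
        divGenerator (2 - α) y - v * y / (2 - α - 1) + u / (2 - α) := by
    have h1 : 1 - α ≠ 0 := sub_ne_zero.2 hα1.symm
    have h2 : 2 - α ≠ 0 := sub_ne_zero.2 hα2.symm
    rw [divGenerator, show 2 - α - 1 = 1 - α by ring]
    field_simp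
  simp only [dualDivNMF, split_summand]
  rw [Finset.sum_comm, ← Finset.sum_add_distrib]
  refine Finset.sum_congr rfl fun j _ => ?_
  rw [Finset.sum_add_distrib, Finset.sum_sub_distrib, ← Finset.sum_div]
  rfl

theorem dualDivNMF_nonincreasing_H_update_general {α : ℝ} (hα1 : α ≠ 1) (hα2 : α ≠ 2)
    {p n k : ℕ} (V : Fin p → Fin n → ℝ) (W : Fin p → Fin k → ℝ) (Ht : Fin k → Fin n → ℝ)
    (hV : ∀ i j, 0 < V i j) (hW : ∀ i a, 0 ≤ W i a) (hWcol : ∀ a, ∃ i, 0 < W i a)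
    (hHt : ∀ a j, 0 ≤ Ht a j) (hWHt : ∀ i j, 0 < ∑ b, W i b * Ht b j) :
    let Hnext : Fin k → Fin n → ℝ := fun a j => Ht a j *
      ((∑ i, (1 / ∑ b, W i b * Ht b j) ^ (α - 1) * W i a) /
        (∑ i, W i a * V i j ^ (1 - α))) ^ (1 / (α - 1))
    dualDivNMF α V W Hnext ≤ dualDivNMF α V W Ht := by
  intro Hnext
  have inv_rpow_eq (i : Fin p) (j : Fin n) :
      (1 / ∑ b, W i b * Ht b j) ^ (α - 1) = (∑ b, W i b * Ht b j) ^ (2 - α - 1) := by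
    rw [one_div, Real.inv_rpow (hWHt i j).le, ← Real.rpow_neg (hWHt i j).le]
    ring_nf
  have hHnext (j : Fin n) : (fun b => Hnext b j) = (fun b => Ht b j) * fun b =>
      (updateNumerator (2 - α) (of W) (fun b => Ht b j) b /
        ((fun i => V i j ^ (1 - α)) ᵥ* of W) b) ^ (1 / (1 - (2 - α))) := by
    funext a
    simp only [Hnext, Pi.mul_apply, updateNumerator, vecMul, mulVec, dotProduct, of_apply,
      inv_rpow_eq, mul_comm (W _ a), show 1 - (2 - α) = α - 1 by ring]
  rw [dualDivNMF_eq_sum_columnLoss_add hα1 hα2, dualDivNMF_eq_sum_columnLoss_add hα1 hα2]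
  gcongr with j
  rw [hHnext]
  exact columnLoss_update_le (sub_ne_zero.2 hα2.symm) (fun hs => hα1 (by linarith)) hW hWcol
    (fun i => Real.rpow_pos_of_pos (hV i j) _) (fun b => hHt b j) fun i => hWHt i j

/-- Theorem 1, H-update: the generalized dual KL divergence is non-increasing under the
multiplicative update rule for `H`. -/
theorem dualDivNMF_nonincreasing_H_update (α : ℝ) (hα1 : α ≠ 1) (hα2 : α ≠ 2)
    (p n k : ℕ) (hp : 1 ≤ p) (hn : 1 ≤ n) (hk : 1 ≤ k)
    (V : Fin p → Fin n → ℝ) (W : Fin p → Fin k → ℝ) (Ht : Fin k → Fin n → ℝ)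
    (hV : ∀ i j, 0 < V i j) (hW : ∀ i a, 0 < W i a) (hHt : ∀ a j, 0 < Ht a j) :
    let Hnext : Fin k → Fin n → ℝ := fun a j => Ht a j *
      ((∑ i, (1 / ∑ b, W i b * Ht b j) ^ (α - 1) * W i a) /
        (∑ i, W i a * V i j ^ (1 - α))) ^ (1 / (α - 1))
    dualDivNMF α V W Hnext ≤ dualDivNMF α V W Ht :=
  dualDivNMF_nonincreasing_H_update_general hα1 hα2 V W Ht hV (fun i a => (hW i a).le)
    (fun a => ⟨⟨0, hp⟩, hW _ a⟩) (fun a j => (hHt a j).le)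
    fun i j => Finset.sum_pos (fun b _ => mul_pos (hW i b) (hHt b j)) ⟨⟨0, hk⟩, Finset.mem_univ _⟩
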